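/- Let g be a post-Lie algebra over a field of characteristic zero with post-symmetric brace operations {T_n}, regarded as a single operation T(X; y) on finite lists X of elements of g (with T((); y) = y). Then for all lists X = (x_1, …, x_n) and Y = (y_1, …, y_m) of elements of g and all z ∈ g: T(X; T(Y; z)) = Σ_f T( X_{f^{-1}(0)} followed by the m elements T(X_{f^{-1}(1)}; y_1), …, T(X_{f^{-1}(m)}; y_m) ; z), where the sum ranges over all functions f : {1, …, n} → {0, 1, …, m}, and X_S denotes the sublist of X consisting of the entries x_j with j ∈ S taken in increasing order of j (with X_∅ the empty list). -/

import Mathlib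

/-- The post-symmetric brace operations of a post-Lie algebra, as a single operation on
lists: `brace t [] y = y`, `brace t [x] y = t x y`, and for `n ≥ 2`
`brace t (x :: X) y = t x (brace t X y) - ∑ₖ brace t (X with xₖ replaced by t x xₖ) y`. -/
def brace {K : Type*} [Field K] {g : Type*} [AddCommGroup g] [Module K g]
    (t : g →ₗ[K] g →ₗ[K] g) : List g → g → g
  | [], y => y
  | x :: X, y =>
      t x (brace t X y) -
        ∑ k ∈ Finset.range X.length, brace t (X.set k (t x (X.getD k 0))) y
  termination_by l _ => l.length
  decreasing_by
    all_goals (simp only [List.length_set, List.length_cons]; omega)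

/-- The sublist `X_S` of `X` consisting of the entries `xⱼ` with `f j = i`, taken in
increasing order of `j`. -/
def subl {g : Type*} (X : List g) (f : Fin X.length → ℕ) (i : ℕ) : List g :=
  ((List.finRange X.length).filter (fun j => f j = i)).map X.get

/-!
Write `T(X; y)` for `brace t X y`. The recursion for `T` says that
`t x T(X; y) = T(x, X; y) + ∑ₖ T(X with xₖ replaced by t x xₖ; y)`, and the identity follows by
induction on the length of `X`. Apply this formula to each summand of `t x T(X; T(Y; z))`, first to
the outer brace and then, by additivity of `T` in each entry, to the inner braces. This yields two
kinds of terms: those with `x` put in front of one of the blocks of `X`, and those with `t x`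
applied to one entry of one block. The former make up the right-hand side for `x, X`. The latter
make up the right-hand sides for the lists `X` with one entry replaced, which the recursion
subtracts on the left-hand side.
-/

section SumModify

variable {α M N : Type*} [AddCommMonoid M] [AddCommMonoid N]

/-- The sum of `H` over the lists obtained from `L` by applying `e` to exactly one entry. If `H` is
extended linearly to the free algebra on `α`, this is `H` precomposed with the derivation that
extends `e`. -/
def sumModify (e : α → α) (H : List α → M) (L : List α) : M :=
  ∑ k ∈ Finset.range L.length, H (L.modify k e)

@[simp]
theorem sumModify_nil (e : α → α) (H : List α → M) : sumModify e H [] = 0 := rfl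

theorem sumModify_cons (e : α → α) (H : List α → M) (a : α) (L : List α) :
    sumModify e H (a :: L) = H (e a :: L) + sumModify e (fun L' => H (a :: L')) L := by
  simp [sumModify, Finset.sum_range_succ', add_comm]

theorem sumModify_append (e : α → α) (H : List α → M) (U V : List α) :
    sumModify e H (U ++ V) =
      sumModify e (fun L => H (L ++ V)) U + sumModify e (fun L => H (U ++ L)) V := by
  induction U generalizing H with
  | nil => simp
  | cons a U ih => simp [sumModify_cons, ih, add_assoc]

theorem sumModify_congr (e : α → α) {H H' : List α → M} {L : List α}
    (h : ∀ L' : List α, L'.length = L.length → H L' = H' L') :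
    sumModify e H L = sumModify e H' L :=
  Finset.sum_congr rfl fun _ _ => h _ (List.length_modify ..)

theorem sumModify_add (e : α → α) (H H' : List α → M) (L : List α) :
    sumModify e (fun L' => H L' + H' L') L = sumModify e H L + sumModify e H' L :=
  Finset.sum_add_distrib

theorem sumModify_sum {κ : Type*} (s : Finset κ) (e : α → α) (H : κ → List α → M) (L : List α) :
    sumModify e (fun L' => ∑ k ∈ s, H k L') L = ∑ k ∈ s, sumModify e (H k) L :=
  Finset.sum_comm

theorem map_sumModify (φ : M →+ N) (e : α → α) (H : List α → M) (L : List α) :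
    φ (sumModify e H L) = sumModify e (fun L' => φ (H L')) L :=
  map_sum φ _ _

theorem ofFn_update_eq_set {m : ℕ} (v : Fin m → α) (i : Fin m) (a : α) :
    List.ofFn (Function.update v i a) = (List.ofFn v).set i a := by
  simp [List.ofFn_eq_map, (List.nodup_finRange m).map_update]

theorem sumModify_ofFn {m : ℕ} (e : α → α) (H : List α → M) (v : Fin m → α) :
    sumModify e H (List.ofFn v) = ∑ i, H (List.ofFn (Function.update v i (e (v i)))) := by
  rw [sumModify, List.length_ofFn, ← Fin.sum_univ_eq_sum_range]
  refine Finset.sum_congr rfl fun i _ => ?_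
  simp [ofFn_update_eq_set, List.modify_eq_take_cons_drop, List.set_eq_take_append_cons_drop]

end SumModify

section AddInEntries

variable {A M : Type*} [Add A] [AddCommMonoid M] {n : ℕ} {H : List A → M}

/-- Additivity of a function of words in each letter, on words of length `n`. -/
def AddInEntries (n : ℕ) (H : List A → M) : Prop :=
  ∀ (U V : List A) (a b : A), U.length + V.length + 1 = n →
    H (U ++ (a + b) :: V) = H (U ++ a :: V) + H (U ++ b :: V)

theorem AddInEntries.sumModify_add_left (hH : AddInEntries n H) (e e' : A → A) {L : List A}
    (hL : L.length = n) : sumModify (e + e') H L = sumModify e H L + sumModify e' H L := by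
  simp only [sumModify, ← Finset.sum_add_distrib]
  refine Finset.sum_congr rfl fun k hk => ?_
  have hk : k < L.length := Finset.mem_range.1 hk
  simp only [List.modify_eq_take_cons_drop hk, Pi.add_apply]
  exact hH _ _ _ _ (by grind)

protected theorem AddInEntries.sumModify (hH : AddInEntries n H) (e : A →ₙ+ A) :
    AddInEntries n (sumModify e H) := by
  intro U V a b hn
  have hU : sumModify e (fun L => H (L ++ (a + b) :: V)) U =
      sumModify e (fun L => H (L ++ a :: V) + H (L ++ b :: V)) U :=
    sumModify_congr _ fun L hL => hH L V a b (by omega)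
  have hV : sumModify e (fun L => H (U ++ (a + b) :: L)) V =
      sumModify e (fun L => H (U ++ a :: L) + H (U ++ b :: L)) V :=
    sumModify_congr _ fun L hL => hH U L a b (by omega)
  simp only [sumModify_append, sumModify_cons, map_add, hH U V _ _ hn, hU, hV, sumModify_add]
  abel

theorem AddInEntries.append_ofFn_update (hH : AddInEntries n H) {P : List A} {m : ℕ}
    (hn : P.length + m = n) (v : Fin m → A) (i : Fin m) (a b : A) :
    H (P ++ List.ofFn (Function.update v i (a + b))) =
      H (P ++ List.ofFn (Function.update v i a)) + H (P ++ List.ofFn (Function.update v i b)) := by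
  have hsplit (c : A) : P ++ List.ofFn (Function.update v i c) =
      (P ++ (List.ofFn v).take i) ++ c :: (List.ofFn v).drop (i + 1) := by
    simp [ofFn_update_eq_set, List.set_eq_take_append_cons_drop]
  simp only [hsplit]
  exact hH _ _ _ _ (by grind)

end AddInEntries

section SumFibers

variable {ι α M N : Type*} [DecidableEq ι]

/-- The family of sublists into which a map `f` from the positions of `X` to `ι` cuts `X`; for
`ι = Fin (m + 1)` these are the lists `subl X f i`. -/
def fiberLists (X : List α) (f : Fin X.length → ι) (i : ι) : List α :=
  ((List.finRange X.length).filter (fun j => f j = i)).map X.get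

theorem subl_val_eq_fiberLists {m : ℕ} (X : List α) (f : Fin X.length → Fin m) (i : Fin m) :
    subl X (fun j => (f j : ℕ)) i = fiberLists X f i := by
  simp [subl, fiberLists, Fin.ext_iff]

theorem fiberLists_cons (x : α) (X : List α) (i : ι) (f : Fin X.length → ι) :
    fiberLists (x :: X) (Fin.cons i f : Fin (X.length + 1) → ι) =
      Function.update (fiberLists X f) i (x :: fiberLists X f i) := by
  funext k
  by_cases hk : k = i
  · subst hk
    simp [fiberLists, List.finRange_succ, List.filter_map, Function.comp_def]
  · simp [fiberLists, List.finRange_succ, List.filter_map, Function.comp_def, hk, Ne.symm hk]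

variable [Fintype ι] [AddCommMonoid M] [AddCommMonoid N]

/-- The sum of `G` over all ways of distributing the entries of `X` over lists indexed by `ι`,
keeping their order. -/
def sumFibers (X : List α) (G : (ι → List α) → M) : M :=
  ∑ f : Fin X.length → ι, G (fiberLists X f)

theorem sumFibers_nil (G : (ι → List α) → M) : sumFibers [] G = G fun _ => [] :=
  Fintype.sum_unique (ι := Fin 0 → ι) _

theorem sumFibers_cons (x : α) (X : List α) (G : (ι → List α) → M) :
    sumFibers (x :: X) G = ∑ i, sumFibers X fun A => G (Function.update A i (x :: A i)) := by
  simp only [sumFibers, ← fiberLists_cons]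
  rw [← Fintype.sum_prod_type']
  exact ((Fin.consEquiv fun _ => ι).sum_comp _).symm

theorem sumFibers_add (X : List α) (G G' : (ι → List α) → M) :
    sumFibers X (fun A => G A + G' A) = sumFibers X G + sumFibers X G' :=
  Finset.sum_add_distrib

theorem sumFibers_sum {κ : Type*} (s : Finset κ) (X : List α) (G : κ → (ι → List α) → M) :
    sumFibers X (fun A => ∑ k ∈ s, G k A) = ∑ k ∈ s, sumFibers X (G k) :=
  Finset.sum_comm

theorem map_sumFibers (φ : M →+ N) (X : List α) (G : (ι → List α) → M) :
    φ (sumFibers X G) = sumFibers X fun A => φ (G A) :=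
  map_sum φ _ _

/-- The analogue of `sumModify` for functions of a family of lists: exactly one entry of exactly one
member of the family is modified. -/
def sumModifyFamily (e : α → α) (G : (ι → List α) → M) (A : ι → List α) : M :=
  ∑ i, sumModify e (fun L => G (Function.update A i L)) (A i)

theorem sumModifyFamily_update_cons (e : α → α) (G : (ι → List α) → M) (A : ι → List α) (i : ι)
    (a : α) :
    sumModifyFamily e G (Function.update A i (a :: A i)) =
      G (Function.update A i (e a :: A i)) +
        sumModifyFamily e (fun B => G (Function.update B i (a :: B i))) A := by
  have hne (j : ι) (hj : j ∈ Finset.univ.erase i) :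
      sumModify e (fun L => G (Function.update (Function.update A i (a :: A i)) j L))
          (Function.update A i (a :: A i) j) =
        sumModify e (fun L => G (Function.update (Function.update A j L) i
          (a :: Function.update A j L i))) (A j) := by
    have hji : j ≠ i := Finset.ne_of_mem_erase hj
    simp only [Function.update_of_ne hji, Function.update_of_ne hji.symm, Function.update_comm hji]
  simp only [sumModifyFamily]
  rw [← Finset.add_sum_erase _ _ (Finset.mem_univ i), Finset.sum_congr rfl hne,
    ← Finset.add_sum_erase _ (fun j => sumModify e _ (A j)) (Finset.mem_univ i)]
  simp only [Function.update_self, Function.update_idem, sumModify_cons, add_assoc]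

theorem sumModify_sumFibers (e : α → α) (G : (ι → List α) → M) (X : List α) :
    sumModify e (fun L => sumFibers L G) X = sumFibers X (sumModifyFamily e G) := by
  induction X generalizing G with
  | nil => simp [sumFibers_nil, sumModifyFamily]
  | cons a X ih =>
    simp only [sumModify_cons, sumFibers_cons, sumModifyFamily_update_cons, sumFibers_add,
      sumModify_sum, ih, Finset.sum_add_distrib]

end SumFibers

section Brace

variable {K : Type*} [Field K] {g : Type*} [AddCommGroup g] [Module K g] (t : g →ₗ[K] g →ₗ[K] g)

theorem brace_nil (y : g) : brace t [] y = y := by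
  rw [brace]

theorem brace_cons (x : g) (X : List g) (y : g) :
    brace t (x :: X) y = t x (brace t X y) - sumModify (t x) (fun L => brace t L y) X := by
  rw [brace, sumModify]
  congr 1
  refine Finset.sum_congr rfl fun k hk => ?_
  have hk : k < X.length := Finset.mem_range.1 hk
  simp [List.modify_eq_take_cons_drop hk, List.set_eq_take_append_cons_drop, hk]

theorem apply_brace (x : g) (X : List g) (y : g) :
    t x (brace t X y) = brace t (x :: X) y + sumModify (t x) (fun L => brace t L y) X := by
  rw [brace_cons, sub_add_cancel]

theorem addInEntries_brace (n : ℕ) (z : g) : AddInEntries n (brace t · z) := by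
  induction n with
  | zero => exact fun U V a b h => absurd h (Nat.succ_ne_zero _)
  | succ n ih =>
    rintro (_ | ⟨u, U⟩) V a b h
    · have hV : V.length = n := by simpa using h
      have hadd : ⇑(t (a + b)) = t a + t b := by rw [map_add]; rfl
      simp only [List.nil_append, brace_cons, hadd, ih.sumModify_add_left _ _ hV, Pi.add_apply]
      abel
    · have hUV : U.length + V.length + 1 = n := by grind
      have hmod := ih.sumModify (t u).toAddHom U V a b hUV
      simp only [LinearMap.coe_toAddHom] at hmod
      simp only [List.cons_append, brace_cons, ih U V a b hUV, hmod, map_add]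
      abel

/-- The list `A₀, T(A₁; y₁), …, T(Aₘ; yₘ)` occurring in the composition identity, where `T` is
`brace t`; the entry `Y i` is `yᵢ₊₁`. -/
def braceBlocks {m : ℕ} (Y : Fin m → g) (A : Fin (m + 1) → List g) : List g :=
  A 0 ++ List.ofFn fun i => brace t (A i.succ) (Y i)

variable {m : ℕ} (Y : Fin m → g) (A : Fin (m + 1) → List g)

theorem braceBlocks_update_zero (L : List g) :
    braceBlocks t Y (Function.update A 0 L) =
      L ++ List.ofFn fun i => brace t (A i.succ) (Y i) := by
  simp [braceBlocks]

theorem braceBlocks_update_succ (i : Fin m) (L : List g) :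
    braceBlocks t Y (Function.update A i.succ L) =
      A 0 ++ List.ofFn (Function.update (fun j => brace t (A j.succ) (Y j)) i
        (brace t L (Y i))) := by
  have hblock : (fun j : Fin m => brace t (Function.update A i.succ L j.succ) (Y j)) =
      Function.update (fun j => brace t (A j.succ) (Y j)) i (brace t L (Y i)) := by
    funext j
    rcases eq_or_ne j i with rfl | hj <;> simp [*]
  simp [braceBlocks, hblock, (Fin.succ_ne_zero i).symm]

theorem brace_update_apply_brace (x z : g) (i : Fin m) :
    brace t (A 0 ++ List.ofFn (Function.update (fun j => brace t (A j.succ) (Y j)) i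
        (t x (brace t (A i.succ) (Y i))))) z =
      brace t (braceBlocks t Y (Function.update A i.succ (x :: A i.succ))) z +
        sumModify (t x) (fun L => brace t (braceBlocks t Y (Function.update A i.succ L)) z)
          (A i.succ) := by
  let φ : g →+ g := AddMonoidHom.mk'
    (fun a => brace t
      (A 0 ++ List.ofFn (Function.update (fun j => brace t (A j.succ) (Y j)) i a)) z)
    ((addInEntries_brace t _ z).append_ofFn_update rfl _ i)
  have hφ (L : List g) : brace t (braceBlocks t Y (Function.update A i.succ L)) z =
      φ (brace t L (Y i)) := by
    rw [braceBlocks_update_succ]; rfl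
  simp only [hφ, ← map_sumModify, ← map_add, ← apply_brace]
  rfl

theorem apply_brace_braceBlocks (x z : g) :
    t x (brace t (braceBlocks t Y A) z) =
      ∑ i, brace t (braceBlocks t Y (Function.update A i (x :: A i))) z +
        sumModifyFamily (t x) (fun B => brace t (braceBlocks t Y B) z) A := by
  rw [apply_brace, braceBlocks, sumModify_append, sumModify_ofFn, sumModifyFamily]
  simp only [brace_update_apply_brace, Fin.sum_univ_succ, braceBlocks_update_zero,
    Finset.sum_add_distrib, List.cons_append]
  abel

theorem brace_brace_eq_sumFibers (X : List g) (z : g) :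
    brace t X (brace t (List.ofFn Y) z) =
      sumFibers X fun A => brace t (braceBlocks t Y A) z := by
  induction hn : X.length generalizing X with
  | zero =>
    obtain rfl := List.length_eq_zero_iff.1 hn
    simp [sumFibers_nil, braceBlocks, brace_nil]
  | succ n ih =>
    obtain ⟨x, X, rfl⟩ := List.exists_cons_of_length_eq_add_one hn
    have hX : X.length = n := by simpa using hn
    have hmod : sumModify (t x) (fun L => brace t L (brace t (List.ofFn Y) z)) X =
        sumFibers X (sumModifyFamily (t x) fun A => brace t (braceBlocks t Y A) z) := by
      rw [← sumModify_sumFibers]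
      exact sumModify_congr _ fun L hL => ih L (hL.trans hX)
    rw [brace_cons, hmod, ih X hX, sub_eq_iff_eq_add]
    calc t x (sumFibers X fun A => brace t (braceBlocks t Y A) z)
        = sumFibers X fun A => t x (brace t (braceBlocks t Y A) z) :=
          map_sumFibers (t x).toAddMonoidHom _ _
      _ = _ := by
          simp only [apply_brace_braceBlocks, sumFibers_add, sumFibers_sum, sumFibers_cons]

theorem brace_composition_general (X Y : List g) (z : g) :
    brace t X (brace t Y z) =
      ∑ f : Fin X.length → Fin (Y.length + 1),
        brace t
          (subl X (fun j => (f j : ℕ)) 0 ++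
            (List.finRange Y.length).map
              (fun (i : Fin Y.length) =>
                brace t (subl X (fun j => (f j : ℕ)) ((i : ℕ) + 1)) (Y.get i)))
          z := by
  have h := brace_brace_eq_sumFibers t Y.get X z
  rw [List.ofFn_get] at h
  simp only [h, sumFibers, braceBlocks, ← subl_val_eq_fiberLists, List.ofFn_eq_map, Fin.val_zero,
    Fin.val_succ]

end Brace

/-- The composition identity for post-symmetric braces:
`T(X; T(Y; z)) = Σ_f T(X_{f⁻¹(0)}, T(X_{f⁻¹(1)}; y₁), …, T(X_{f⁻¹(m)}; y_m); z)`,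
where the sum runs over all maps `f : {1,…,n} → {0,1,…,m}`. -/
theorem brace_composition {K : Type*} [Field K] [CharZero K]
    {g : Type*} [LieRing g] [LieAlgebra K g] (t : g →ₗ[K] g →ₗ[K] g)
    (h1 : ∀ z x y : g, t z ⁅x, y⁆ = ⁅t z x, y⁆ + ⁅x, t z y⁆)
    (h2 : ∀ x y z : g, t ⁅x, y⁆ z =
      (t x (t y z) - t (t x y) z) - (t y (t x z) - t (t y x) z))
    (X Y : List g) (z : g) :
    brace t X (brace t Y z) =
      ∑ f : Fin X.length → Fin (Y.length + 1),
        brace t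
          (subl X (fun j => (f j : ℕ)) 0 ++
            (List.finRange Y.length).map
              (fun (i : Fin Y.length) => brace t (subl X (fun j => (f j : ℕ)) ((i : ℕ) + 1)) (Y.get i)))
          z :=
  brace_composition_general t X Y z
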